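/- arXiv:2509.24045 — 2 statements merged into one kernel-verified Lean document; each statement's English description precedes it below -/
import Mathlib

section
/- For λ ∈ [0,1] let |Ψ_λ⟩ = √λ |00⟩ + √(1−λ) |11⟩ in ℂ² ⊗ ℂ², and let I₂(Ψ_λ) = (|⟨00|Ψ_λ⟩|² + |⟨11|Ψ_λ⟩|²) + (|⟨++|Ψ_λ⟩|² + |⟨−−|Ψ_λ⟩|²). Then I₂(Ψ_λ) > 3/2 if and only if λ ∈ (0,1), i.e. |Ψ_λ⟩ violates the two-MUB separability bound 1 + 1/2 exactly when it is entangled (not a product vector). -/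
/-!
A direct computation gives `I₂(Ψ_λ) = 3/2 + √λ √(1-λ)` (`I2_Psi`), which exceeds `3/2` exactly
when both square roots are positive. A product vector `φ ⊗ χ` has a coefficient matrix of
determinant zero, whereas that of `Ψ_λ` has determinant `√λ √(1-λ)`, so `Ψ_λ` is entangled for
`0 < λ < 1`; at the endpoints it is `|11⟩` or `|00⟩`.
-/

open BigOperators

/-- Computational basis vector |0⟩ of ℂ². -/
noncomputable def ket0 : Fin 2 → ℂ := fun i => if i = 0 then 1 else 0

/-- Computational basis vector |1⟩ of ℂ². -/
noncomputable def ket1 : Fin 2 → ℂ := fun i => if i = 1 then 1 else 0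

/-- Hadamard basis vector |+⟩ = (|0⟩+|1⟩)/√2. -/
noncomputable def ketP : Fin 2 → ℂ := fun _ => (1 / Real.sqrt 2 : ℝ)

/-- Hadamard basis vector |−⟩ = (|0⟩−|1⟩)/√2. -/
noncomputable def ketM : Fin 2 → ℂ :=
  fun i => if i = 0 then ((1 / Real.sqrt 2 : ℝ) : ℂ) else (-(1 / Real.sqrt 2 : ℝ) : ℝ)

/-- Inner product ⟨a ⊗ b | ψ⟩ for a two-qubit state ψ. -/
noncomputable def braket2 (a b : Fin 2 → ℂ) (ψ : Fin 2 × Fin 2 → ℂ) : ℂ :=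
  ∑ p : Fin 2 × Fin 2, (starRingEnd ℂ) (a p.1 * b p.2) * ψ p

/-- The state |Ψ_λ⟩ = √λ |00⟩ + √(1−λ) |11⟩ in ℂ² ⊗ ℂ². -/
noncomputable def Psi (l : ℝ) : Fin 2 × Fin 2 → ℂ :=
  fun p => if p = (0, 0) then ((Real.sqrt l : ℝ) : ℂ)
    else if p = (1, 1) then ((Real.sqrt (1 - l) : ℝ) : ℂ) else 0

/-- The two-MUB correlation I₂. -/
noncomputable def I2 (ψ : Fin 2 × Fin 2 → ℂ) : ℝ :=
  (‖braket2 ket0 ket0 ψ‖ ^ 2 + ‖braket2 ket1 ket1 ψ‖ ^ 2)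
    + (‖braket2 ketP ketP ψ‖ ^ 2 + ‖braket2 ketM ketM ψ‖ ^ 2)

/-- The closed form `I₂(Ψ_λ) = 3/2 + √λ √(1-λ)`: the computational terms give
`λ + (1-λ) = 1`, and both Hadamard amplitudes equal `(√λ + √(1-λ)) / 2`. -/
theorem I2_Psi (l : ℝ) (hl0 : 0 ≤ l) (hl1 : l ≤ 1) :
    I2 (Psi l) = 3 / 2 + Real.sqrt l * Real.sqrt (1 - l) := by
  have h2 : (1 / Real.sqrt 2) * (1 / Real.sqrt 2) = (1 / 2 : ℝ) := by
    rw [div_mul_div_comm, Real.mul_self_sqrt (by norm_num)]; norm_num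
  have e0 : braket2 ket0 ket0 (Psi l) = ((Real.sqrt l : ℝ) : ℂ) := by
    simp [braket2, ket0, Psi, Fintype.sum_prod_type]
  have e1 : braket2 ket1 ket1 (Psi l) = ((Real.sqrt (1 - l) : ℝ) : ℂ) := by
    simp [braket2, ket1, Psi, Fintype.sum_prod_type]
  have eP : braket2 ketP ketP (Psi l)
      = (((Real.sqrt l + Real.sqrt (1 - l)) / 2 : ℝ) : ℂ) := by
    have : braket2 ketP ketP (Psi l) = (((1 / Real.sqrt 2) * (1 / Real.sqrt 2) * Real.sqrt l
        + (1 / Real.sqrt 2) * (1 / Real.sqrt 2) * Real.sqrt (1 - l) : ℝ) : ℂ) := by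
      simp [braket2, ketP, Psi, Fintype.sum_prod_type]
    rw [this, h2]; congr 1; ring
  have eM : braket2 ketM ketM (Psi l)
      = (((Real.sqrt l + Real.sqrt (1 - l)) / 2 : ℝ) : ℂ) := by
    have : braket2 ketM ketM (Psi l) = (((1 / Real.sqrt 2) * (1 / Real.sqrt 2) * Real.sqrt l
        + (1 / Real.sqrt 2) * (1 / Real.sqrt 2) * Real.sqrt (1 - l) : ℝ) : ℂ) := by
      simp [braket2, ketM, Psi, Fintype.sum_prod_type]
    rw [this, h2]; congr 1; ring
  rw [I2, e0, e1, eP, eM]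
  simp only [Complex.norm_real, Real.norm_eq_abs, sq_abs]
  have ha := Real.sq_sqrt hl0
  have hb := Real.sq_sqrt (sub_nonneg.mpr hl1)
  linear_combination (3 / 2) * ha + (3 / 2) * hb

/-- For λ ∈ [0,1], `I₂(Ψ_λ) > 3/2` iff `λ ∈ (0,1)`, i.e. exactly when |Ψ_λ⟩ is
entangled (not a product of unit vectors). -/
theorem stmt2 (l : ℝ) (hl0 : 0 ≤ l) (hl1 : l ≤ 1) :
    (I2 (Psi l) > 3 / 2 ↔ (0 < l ∧ l < 1)) ∧
    ((0 < l ∧ l < 1) ↔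
      ¬ ∃ (φ χ : Fin 2 → ℂ), (∑ x, ‖φ x‖ ^ 2 = 1) ∧ (∑ x, ‖χ x‖ ^ 2 = 1) ∧
        ∀ p : Fin 2 × Fin 2, Psi l p = φ p.1 * χ p.2) := by
  constructor
  · rw [I2_Psi l hl0 hl1]
    constructor
    · intro h
      have hp : 0 < Real.sqrt l * Real.sqrt (1 - l) := by linarith
      have ha := pos_of_mul_pos_left hp (Real.sqrt_nonneg _)
      have hb := pos_of_mul_pos_right hp (Real.sqrt_nonneg _)
      rw [Real.sqrt_pos] at ha hb
      exact ⟨ha, by linarith⟩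
    · rintro ⟨h0, h1⟩
      have := mul_pos (Real.sqrt_pos.mpr h0) (Real.sqrt_pos.mpr (sub_pos.mpr h1))
      linarith
  · constructor
    · rintro ⟨h0, h1⟩ ⟨φ, χ, -, -, h⟩
      have h00 : ((Real.sqrt l : ℝ) : ℂ) = φ 0 * χ 0 := by simpa [Psi] using h (0, 0)
      have h11 : ((Real.sqrt (1 - l) : ℝ) : ℂ) = φ 1 * χ 1 := by simpa [Psi] using h (1, 1)
      have h01 : 0 = φ 0 * χ 1 := by simpa [Psi] using h (0, 1)
      -- The determinant of the coefficient matrix of a product vector vanishes.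
      have hdet : ((Real.sqrt l : ℝ) : ℂ) * ((Real.sqrt (1 - l) : ℝ) : ℂ) = 0 := by
        rw [h00, h11]; linear_combination -(φ 1 * χ 0) * h01
      have := mul_pos (Real.sqrt_pos.mpr h0) (Real.sqrt_pos.mpr (sub_pos.mpr h1))
      exact this.ne' (by exact_mod_cast hdet)
    · intro h
      refine ⟨lt_of_le_of_ne hl0 ?_, lt_of_le_of_ne hl1 ?_⟩
      · rintro rfl
        refine h ⟨ket1, ket1, by simp [ket1], by simp [ket1], ?_⟩
        rintro ⟨i, j⟩
        fin_cases i <;> fin_cases j <;> simp [Psi, ket1]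
      · rintro rfl
        refine h ⟨ket0, ket0, by simp [ket0], by simp [ket0], ?_⟩
        rintro ⟨i, j⟩
        fin_cases i <;> fin_cases j <;> simp [Psi, ket0]
end

section
/- Let {b_i}_{i=0}^{d−1} and {c_i}_{i=0}^{d−1} be two mutually unbiased orthonormal bases of ℂ^d. Then for all unit vectors φ, χ ∈ ℂ^d, Σ_{i=0}^{d−1} |⟨b_i|φ⟩|² |⟨b_i|χ⟩|² + Σ_{i=0}^{d−1} |⟨c_i|φ⟩|² |⟨c_i|χ⟩|² ≤ 1 + 1/d. That is, every pure product state of ℂ^d ⊗ ℂ^d satisfies the two-MUB mutual-predictability bound I₂ ≤ 1 + 1/d. -/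
/-!
By `st ≤ (s² + t²) / 2` it suffices to bound `∑ pᵢ² + ∑ qⱼ² ≤ 1 + 1/d` for a single unit vector `ψ`,
where `pᵢ = |⟨bᵢ|ψ⟩|²` and `qⱼ = |⟨cⱼ|ψ⟩|²`. This is a Bessel inequality in the Hilbert–Schmidt space:
the rank-one projections satisfy `⟪|u⟩⟨u|, |v⟩⟨v|⟫ = |⟨u|v⟩|²`, so for two mutually unbiased bases
the squared Hilbert–Schmidt norm of
`|ψ⟩⟨ψ| - ∑ (pᵢ - 1/d) |bᵢ⟩⟨bᵢ| - ∑ qⱼ |cⱼ⟩⟨cⱼ|` equals `1 + 1/d - ∑ pᵢ² - ∑ qⱼ²`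
(the cross terms vanish because `∑ (pᵢ - 1/d) = 0`, by Parseval). Nonnegativity of that norm, in the
form of `gram_nonneg`, is the claim.
-/

open BigOperators

/-- Inner product ⟨a|ψ⟩ in ℂ^d. -/
noncomputable def braket {d : ℕ} (a ψ : Fin d → ℂ) : ℂ :=
  ∑ x, (starRingEnd ℂ) (a x) * ψ x

lemma braket_conj_symm {d : ℕ} (u v : Fin d → ℂ) :
    (starRingEnd ℂ) (braket u v) = braket v u := by
  simp [braket, map_sum, mul_comm]

lemma norm_braket_comm {d : ℕ} (u v : Fin d → ℂ) : ‖braket u v‖ = ‖braket v u‖ := by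
  rw [← braket_conj_symm, RCLike.norm_conj]

lemma braket_self {d : ℕ} (u : Fin d → ℂ) : braket u u = ((∑ x, ‖u x‖ ^ 2 : ℝ) : ℂ) := by
  simp [braket, Complex.conj_mul']

/-- The Gram matrix `|⟨vₛ|vₜ⟩|²` of rank-one projections is positive semidefinite: the quadratic
form is the squared Hilbert–Schmidt norm of `∑ₛ aₛ |vₛ⟩⟨vₛ|`. -/
lemma gram_nonneg {d : ℕ} {ι : Type*} [Fintype ι] (a : ι → ℝ) (v : ι → Fin d → ℂ) :
    0 ≤ ∑ s, ∑ t, a s * a t * ‖braket (v s) (v t)‖ ^ 2 := by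
  have key : ((∑ s, ∑ t, a s * a t * ‖braket (v s) (v t)‖ ^ 2 : ℝ) : ℂ)
      = ((∑ x, ∑ y, ‖∑ s, (a s : ℂ) * ((starRingEnd ℂ) (v s x) * v s y)‖ ^ 2 : ℝ) : ℂ) := by
    push_cast
    simp only [← Complex.conj_mul', braket_conj_symm]
    simp only [braket, map_sum, map_mul, Complex.conj_conj, Complex.conj_ofReal,
      Finset.sum_mul_sum]
    simp only [Finset.mul_sum]
    have h1 : ∀ F : ι → ι → Fin d → Fin d → ℂ,
        ∑ x, ∑ y, ∑ s, ∑ t, F s t x y = ∑ s, ∑ t, ∑ x, ∑ y, F s t x y := by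
      intro F
      calc _ = ∑ x, ∑ s, ∑ y, ∑ t, F s t x y :=
            Finset.sum_congr rfl fun x _ => Finset.sum_comm
        _ = ∑ s, ∑ x, ∑ t, ∑ y, F s t x y := by
            rw [Finset.sum_comm]
            exact Finset.sum_congr rfl fun s _ => Finset.sum_congr rfl fun x _ => Finset.sum_comm
        _ = _ := Finset.sum_congr rfl fun s _ => Finset.sum_comm
    rw [h1]
    refine Finset.sum_congr rfl fun s _ => Finset.sum_congr rfl fun t _ => ?_
    refine Finset.sum_congr rfl fun x _ => Finset.sum_congr rfl fun y _ => ?_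
    ring
  rw [Complex.ofReal_inj.mp key]
  positivity

lemma parseval {d : ℕ} (b : Fin d → Fin d → ℂ)
    (hb : ∀ i j, braket (b i) (b j) = if i = j then 1 else 0) (ψ : Fin d → ℂ) :
    ∑ i, ‖braket (b i) ψ‖ ^ 2 = ∑ x, ‖ψ x‖ ^ 2 := by
  let B : Matrix (Fin d) (Fin d) ℂ := Matrix.of fun i x => (starRingEnd ℂ) (b i x)
  have h1 : B * B.conjTranspose = 1 := by
    ext i j
    rw [Matrix.one_apply, ← hb]
    simp [B, Matrix.mul_apply, braket]
  have h2 : B.conjTranspose * B = 1 := mul_eq_one_comm.mp h1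
  have h3 : ∀ i, braket (b i) ψ = B.mulVec ψ i := fun i => rfl
  have h4 : ∀ w : Fin d → ℂ, ((∑ x, ‖w x‖ ^ 2 : ℝ) : ℂ) = dotProduct (star w) w := by
    intro w
    simp [dotProduct, Complex.conj_mul']
  apply Complex.ofReal_injective
  simp only [h3]
  rw [h4, h4, Matrix.star_mulVec, ← Matrix.dotProduct_mulVec, Matrix.mulVec_mulVec, h2,
    Matrix.one_mulVec]

lemma single_bound {d : ℕ} (hd : 0 < d) (b c : Fin d → Fin d → ℂ)
    (hb : ∀ i j, braket (b i) (b j) = if i = j then 1 else 0)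
    (hc : ∀ i j, braket (c i) (c j) = if i = j then 1 else 0)
    (hmub : ∀ i j, ‖braket (b i) (c j)‖ ^ 2 = 1 / (d : ℝ))
    (ψ : Fin d → ℂ) (hψ : ∑ x, ‖ψ x‖ ^ 2 = 1) :
    (∑ i, (‖braket (b i) ψ‖ ^ 2) ^ 2) + (∑ i, (‖braket (c i) ψ‖ ^ 2) ^ 2) ≤ 1 + 1 / (d : ℝ) := by
  have hp : ∑ i, ‖braket (b i) ψ‖ ^ 2 = 1 := (parseval b hb ψ).trans hψ
  have hG := gram_nonneg
    (Sum.elim (fun _ : Unit => (1 : ℝ)) (Sum.elim (fun i => -(‖braket (b i) ψ‖ ^ 2 - 1 / (d : ℝ)))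
      (fun j => -‖braket (c j) ψ‖ ^ 2)))
    (Sum.elim (fun _ : Unit => ψ) (Sum.elim b c))
  have hd_ne : (d : ℝ) ≠ 0 := by positivity
  have hbb : ∀ i j, ‖braket (b i) (b j)‖ ^ 2 = if i = j then (1 : ℝ) else 0 := by
    intro i j; rw [hb]; split_ifs <;> simp
  have hcc : ∀ i j, ‖braket (c i) (c j)‖ ^ 2 = if i = j then (1 : ℝ) else 0 := by
    intro i j; rw [hc]; split_ifs <;> simp
  have hcb : ∀ i j, ‖braket (c i) (b j)‖ ^ 2 = 1 / (d : ℝ) := by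
    intro i j; rw [norm_braket_comm, hmub]
  have hψψ : ‖braket ψ ψ‖ ^ 2 = 1 := by rw [braket_self, hψ]; simp
  simp only [Fintype.sum_sum_type, Sum.elim_inl, Sum.elim_inr, Finset.univ_unique,
    Finset.sum_singleton, hbb, hcc, hcb, hmub, hψψ, norm_braket_comm ψ, mul_ite, mul_one, mul_zero,
    Finset.sum_ite_eq, Finset.mem_univ, if_true] at hG
  generalize hP : (fun i => ‖braket (b i) ψ‖ ^ 2) = p at *
  generalize hQ : (fun i => ‖braket (c i) ψ‖ ^ 2) = q at *
  have hP' : ∀ i, ‖braket (b i) ψ‖ ^ 2 = p i := fun i => congrFun hP i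
  have hQ' : ∀ i, ‖braket (c i) ψ‖ ^ 2 = q i := fun i => congrFun hQ i
  simp only [hP', hQ'] at *
  have hz : ∑ i, -(p i - 1 / (d : ℝ)) = 0 := by
    rw [Finset.sum_neg_distrib, Finset.sum_sub_distrib, hp]
    simp [hd_ne]
  -- both cross terms carry the vanishing factor `∑ (pᵢ - 1/d)`
  have hx1 : ∑ i, ∑ j, -(p i - 1 / (d : ℝ)) * -q j * (1 / (d : ℝ)) = 0 := by
    simp only [← Finset.sum_mul, ← Finset.mul_sum]
    rw [hz]; simp
  have hx2 : ∑ j, ∑ i, -q j * -(p i - 1 / (d : ℝ)) * (1 / (d : ℝ)) = 0 := by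
    simp only [← Finset.sum_mul, ← Finset.mul_sum]
    rw [hz]; simp
  have hs1 : ∑ i, -(p i - 1 / (d : ℝ)) * p i = 1 / (d : ℝ) - ∑ i, p i ^ 2 := by
    calc _ = ∑ i, (1 / (d : ℝ) * p i - p i ^ 2) := Finset.sum_congr rfl fun i _ => by ring
      _ = _ := by rw [Finset.sum_sub_distrib, ← Finset.mul_sum, hp, mul_one]
  have hs2 : ∑ i, -(p i - 1 / (d : ℝ)) * -(p i - 1 / (d : ℝ)) = ∑ i, p i ^ 2 - 1 / (d : ℝ) := by
    calc _ = ∑ i, (-(-(p i - 1 / (d : ℝ)) * p i) + (1 / (d : ℝ)) * -(p i - 1 / (d : ℝ))) :=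
          Finset.sum_congr rfl fun i _ => by ring
      _ = _ := by
          rw [Finset.sum_add_distrib, ← Finset.mul_sum, hz, Finset.sum_neg_distrib, hs1]; ring
  have hs3 : ∑ j, -q j * q j = -∑ j, q j ^ 2 := by
    rw [← Finset.sum_neg_distrib]; exact Finset.sum_congr rfl fun i _ => by ring
  have hs4 : ∑ j, -q j * -q j = ∑ j, q j ^ 2 := Finset.sum_congr rfl fun i _ => by ring
  simp only [Finset.sum_add_distrib, one_mul, hx1, hx2, hs1, hs2, hs3, hs4] at hG
  linarith

/-- For two mutually unbiased orthonormal bases `{b_i}`, `{c_i}` of ℂ^d and unit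
vectors φ, χ, the two-MUB mutual predictability of the product state φ ⊗ χ
satisfies `I₂ ≤ 1 + 1/d`. -/
theorem stmt3 {d : ℕ} (hd : 0 < d) (b c : Fin d → Fin d → ℂ)
    (hb : ∀ i j, braket (b i) (b j) = if i = j then 1 else 0)
    (hc : ∀ i j, braket (c i) (c j) = if i = j then 1 else 0)
    (hmub : ∀ i j, ‖braket (b i) (c j)‖ ^ 2 = 1 / (d : ℝ))
    (φ χ : Fin d → ℂ) (hφ : ∑ x, ‖φ x‖ ^ 2 = 1) (hχ : ∑ x, ‖χ x‖ ^ 2 = 1) :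
    (∑ i, ‖braket (b i) φ‖ ^ 2 * ‖braket (b i) χ‖ ^ 2)
      + (∑ i, ‖braket (c i) φ‖ ^ 2 * ‖braket (c i) χ‖ ^ 2) ≤ 1 + 1 / (d : ℝ) := by
  have h1 := single_bound hd b c hb hc hmub φ hφ
  have h2 := single_bound hd b c hb hc hmub χ hχ
  have amgm : ∀ e : Fin d → Fin d → ℂ, ∑ i, ‖braket (e i) φ‖ ^ 2 * ‖braket (e i) χ‖ ^ 2
      ≤ ((∑ i, (‖braket (e i) φ‖ ^ 2) ^ 2) + ∑ i, (‖braket (e i) χ‖ ^ 2) ^ 2) / 2 := by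
    intro e
    rw [← Finset.sum_add_distrib, Finset.sum_div]
    refine Finset.sum_le_sum fun i _ => ?_
    linarith [two_mul_le_add_sq (‖braket (e i) φ‖ ^ 2) (‖braket (e i) χ‖ ^ 2)]
  linarith [amgm b, amgm c]
end
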